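/- (Jackson's Theorem.) If f: [−1,1] → ℝ is Lipschitz continuous with constant L, then for every positive integer M there exists a polynomial p of degree at most M such that sup_{x ∈ [−1,1]} |f(x) − p(x)| ≤ 6L/M. -/

import Mathlib

open Polynomial in
lemma jk_natDegree_T (m : ℤ) : (Chebyshev.T ℝ m).natDegree ≤ m.natAbs := by
  simp [Chebyshev.natDegree_T]

lemma jk_int_cos (m : ℤ) : ∫ t in (0:ℝ)..(2 * Real.pi), Real.cos (m * t) =
    if m = 0 then 2 * Real.pi else 0 := by
  split_ifs with h
  · simp [h]
  · have h' : (m : ℝ) ≠ 0 := by exact_mod_cast h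
    rw [intervalIntegral.integral_comp_mul_left (fun x => Real.cos x) h', integral_cos]
    have : Real.sin (m * (2 * Real.pi)) = 0 := by
      have := Real.sin_int_mul_pi (2 * m)
      rw [← this]; congr 1; push_cast; ring
    simp [this]

/-- kernel -/
noncomputable def jkK (M : ℕ) (a : ℤ → ℝ) (t : ℝ) : ℝ :=
  ∑ k ∈ Finset.range (M + 1), ∑ l ∈ Finset.range (M + 1),
    a k * a l * Real.cos (((k : ℤ) - (l : ℤ) : ℤ) * t)

lemma jkK_nonneg (M : ℕ) (a : ℤ → ℝ) (t : ℝ) : 0 ≤ jkK M a t := by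
  have : jkK M a t = (∑ k ∈ Finset.range (M + 1), a k * Real.cos (k * t)) ^ 2 +
      (∑ k ∈ Finset.range (M + 1), a k * Real.sin (k * t)) ^ 2 := by
    rw [sq, sq, Finset.sum_mul_sum, Finset.sum_mul_sum, ← Finset.sum_add_distrib, jkK]
    refine Finset.sum_congr rfl fun k _ => ?_
    rw [← Finset.sum_add_distrib]
    refine Finset.sum_congr rfl fun l _ => ?_
    push_cast
    rw [sub_mul, Real.cos_sub]; ring
  rw [this]; positivity

lemma jkK_cont (M : ℕ) (a : ℤ → ℝ) : Continuous (jkK M a) := by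
  unfold jkK; fun_prop

lemma jkK_periodic (M : ℕ) (a : ℤ → ℝ) : Function.Periodic (jkK M a) (2 * Real.pi) := by
  intro t
  unfold jkK
  refine Finset.sum_congr rfl fun k _ => Finset.sum_congr rfl fun l _ => ?_
  rw [mul_add, Real.cos_add_int_mul_two_pi]

lemma jkK_int (M : ℕ) (a : ℤ → ℝ) : ∫ t in (0:ℝ)..(2 * Real.pi), jkK M a t =
    2 * Real.pi * ∑ k ∈ Finset.range (M + 1), a k ^ 2 := by
  unfold jkK
  rw [intervalIntegral.integral_finsetSum
    (fun k _ => Continuous.intervalIntegrable (by fun_prop) _ _), Finset.mul_sum]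
  refine Finset.sum_congr rfl fun k hk => ?_
  rw [intervalIntegral.integral_finsetSum
    (fun k _ => Continuous.intervalIntegrable (by fun_prop) _ _)]
  simp_rw [intervalIntegral.integral_const_mul, jk_int_cos]
  rw [Finset.sum_eq_single_of_mem k hk]
  · simp; ring
  · intro l _ hl
    rw [if_neg (by omega)]; simp

lemma jkK_int_cos (M : ℕ) (a : ℤ → ℝ) (h0 : a (-1) = 0) (h1 : a (M + 1) = 0) (c : ℝ)
    (hc : ∀ k, a (k + 1) + a (k - 1) = 2 * c * a k) :
    ∫ t in (0:ℝ)..(2 * Real.pi), jkK M a t * Real.cos t =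
    2 * Real.pi * c * ∑ k ∈ Finset.range (M + 1), a k ^ 2 := by
  have e : ∀ t, jkK M a t * Real.cos t =
      ∑ k ∈ Finset.range (M + 1), ∑ l ∈ Finset.range (M + 1),
      (a k * a l / 2 * Real.cos (((k : ℤ) - (l : ℤ) + 1 : ℤ) * t) +
      a k * a l / 2 * Real.cos (((k : ℤ) - (l : ℤ) - 1 : ℤ) * t)) := by
    intro t
    unfold jkK
    rw [Finset.sum_mul]
    refine Finset.sum_congr rfl fun k _ => ?_
    rw [Finset.sum_mul]
    refine Finset.sum_congr rfl fun l _ => ?_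
    push_cast
    rw [add_mul, sub_mul _ 1, Real.cos_add, Real.cos_sub _ (1 * t), one_mul]; ring
  simp_rw [e]
  rw [intervalIntegral.integral_finsetSum
    (fun k _ => Continuous.intervalIntegrable (by fun_prop) _ _), Finset.mul_sum]
  refine Finset.sum_congr rfl fun k hk => ?_
  rw [intervalIntegral.integral_finsetSum
    (fun k _ => Continuous.intervalIntegrable (by fun_prop) _ _)]
  have e2 : ∀ l : ℕ, ∫ t in (0:ℝ)..(2 * Real.pi),
      (a k * a l / 2 * Real.cos (((k : ℤ) - (l : ℤ) + 1 : ℤ) * t) +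
      a k * a l / 2 * Real.cos (((k : ℤ) - (l : ℤ) - 1 : ℤ) * t)) =
      Real.pi * a k * (if l = k + 1 then a l else 0) +
      Real.pi * a k * (if l + 1 = k then a l else 0) := by
    intro l
    rw [intervalIntegral.integral_add (Continuous.intervalIntegrable (by fun_prop) _ _)
      (Continuous.intervalIntegrable (by fun_prop) _ _)]
    simp_rw [intervalIntegral.integral_const_mul, jk_int_cos]
    congr 1
    · by_cases h : l = k + 1
      · rw [if_pos (by omega), if_pos h]; ring
      · rw [if_neg (by omega), if_neg h]; ring
    · by_cases h : l + 1 = k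
      · rw [if_pos (by omega), if_pos h]; ring
      · rw [if_neg (by omega), if_neg h]; ring
  simp_rw [e2]
  rw [Finset.sum_add_distrib, ← Finset.mul_sum, ← Finset.mul_sum]
  have s1 : ∑ l ∈ Finset.range (M + 1), (if l = k + 1 then a l else 0) = a (k + 1) := by
    rw [Finset.sum_ite_eq']
    split_ifs with h
    · simp
    · have : k = M := by simp at h hk; omega
      rw [this, h1]
  have s2 : ∑ l ∈ Finset.range (M + 1), (if l + 1 = k then a l else 0) = a (k - 1) := by
    rcases k with _ | k
    · simp [h0]
    · simp only [add_left_inj]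
      rw [Finset.sum_ite_eq', if_pos (by simp at hk ⊢; omega)]
      congr 1; push_cast; ring
  rw [s1, s2, ← mul_add, hc]; ring

lemma jk_shift (G : ℝ → ℝ) (hp : Function.Periodic G (2 * Real.pi)) (θ : ℝ) :
    (∫ t in (0:ℝ)..(2 * Real.pi), G (θ + t) = ∫ t in (0:ℝ)..(2 * Real.pi), G t) ∧
    (∫ t in (0:ℝ)..(2 * Real.pi), G (θ - t) = ∫ t in (0:ℝ)..(2 * Real.pi), G t) := by
  constructor
  · rw [intervalIntegral.integral_comp_add_left (fun x => G x)]
    have := hp.intervalIntegral_add_eq θ 0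
    simpa using this
  · rw [intervalIntegral.integral_comp_sub_left (fun x => G x)]
    have := hp.intervalIntegral_add_eq (θ - 2 * Real.pi) 0
    simpa using this

lemma jk_pt (x y c : ℝ) (hc : 0 < c) :
    |Real.cos x - Real.cos y| ≤ c / 2 + (1 - Real.cos (x - y)) / c := by
  have h1 : (Real.cos x - Real.cos y) ^ 2 ≤ 2 * (1 - Real.cos (x - y)) := by
    rw [Real.cos_sub]
    nlinarith [Real.sin_sq_add_cos_sq x, Real.sin_sq_add_cos_sq y,
      sq_nonneg (Real.sin x - Real.sin y)]
  have h2 : c / 2 + (1 - Real.cos (x - y)) / c =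
      (c ^ 2 + 2 * (1 - Real.cos (x - y))) / (2 * c) := by field_simp
  rw [h2, le_div_iff₀ (by positivity)]
  nlinarith [sq_abs (Real.cos x - Real.cos y), sq_nonneg (|Real.cos x - Real.cos y| - c)]

lemma jk_pt' (x y c : ℝ) (hc : 0 < c) :
    |Real.cos x - Real.cos y| ≤ c / 2 + (1 - Real.cos (x + y)) / c := by
  have := jk_pt x (-y) c hc
  simpa using this

/-- **Jackson's theorem.** If `f : [−1,1] → ℝ` is Lipschitz with constant `L`, then for
every positive integer `M` there is a polynomial `p` of degree at most `M` with
`sup_{x ∈ [−1,1]} |f x − p x| ≤ 6 L / M`. -/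
theorem jackson_theorem (f : ℝ → ℝ) (L : ℝ)
    (hf : ∀ x ∈ Set.Icc (-1 : ℝ) 1, ∀ y ∈ Set.Icc (-1 : ℝ) 1, |f x - f y| ≤ L * |x - y|)
    (M : ℕ) (hM : 0 < M) :
    ∃ p : Polynomial ℝ, p.natDegree ≤ M ∧
      ∀ x ∈ Set.Icc (-1 : ℝ) 1, |f x - p.eval x| ≤ 6 * L / M := by
  have hL : 0 ≤ L := by
    have h1 := hf 1 (by simp) (-1) (by simp)
    have h2 := abs_nonneg (f 1 - f (-1))
    have h3 : |(1:ℝ) - -1| = 2 := by norm_num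
    rw [h3] at h1; linarith
  set g : ℝ → ℝ := fun φ => f (Real.cos φ) with hg
  have hgL : ∀ x y, |g x - g y| ≤ L * |Real.cos x - Real.cos y| := fun x y =>
    hf _ (Real.cos_mem_Icc x) _ (Real.cos_mem_Icc y)
  have hfc : ContinuousOn f (Set.Icc (-1) 1) := by
    have : LipschitzOnWith ⟨L, hL⟩ f (Set.Icc (-1) 1) := by
      apply LipschitzOnWith.of_dist_le_mul
      intro x hx y hy
      exact hf x hx y hy
    exact this.continuousOn
  have hgc : Continuous g := hfc.comp_continuous Real.continuous_cos Real.cos_mem_Icc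
  have hpi := Real.pi_pos
  have hMp : (0:ℝ) < M := by exact_mod_cast hM
  obtain ⟨h, hh⟩ : ∃ h, h = Real.pi / (M + 2) := ⟨_, rfl⟩
  have hh0 : 0 < h := by rw [hh]; positivity
  obtain ⟨a, ha⟩ : ∃ a : ℤ → ℝ, a = fun k : ℤ => Real.sin ((k + 1) * h) := ⟨_, rfl⟩
  have a0 : a (-1) = 0 := by simp [ha]
  have a1 : a (M + 1) = 0 := by
    simp only [ha]; push_cast
    have : ((M:ℝ) + 1 + 1) * h = Real.pi := by rw [hh]; field_simp; ring
    rw [this, Real.sin_pi]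
  have ac : ∀ k, a (k + 1) + a (k - 1) = 2 * Real.cos h * a k := by
    intro k
    simp only [ha]; push_cast
    rw [show ((k:ℝ) + 1 + 1) * h = (k + 1) * h + h by ring,
      show ((k:ℝ) - 1 + 1) * h = (k + 1) * h - h by ring, Real.sin_add, Real.sin_sub]; ring
  obtain ⟨S, hS⟩ : ∃ S, S = ∑ k ∈ Finset.range (M + 1), a k ^ 2 := ⟨_, rfl⟩
  have hS0 : 0 < S := by
    rw [hS]
    apply Finset.sum_pos' (fun _ _ => sq_nonneg _)
    refine ⟨0, by simp, ?_⟩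
    have : 0 < a (0:ℕ) := by
      simp only [ha]; simp
      apply Real.sin_pos_of_pos_of_lt_pi hh0
      rw [hh, div_lt_iff₀ (by positivity)]; nlinarith
    positivity
  have I0 := jkK_int M a
  have I1 := jkK_int_cos M a a0 a1 _ ac
  rw [← hS] at I0 I1
  have hKc := jkK_cont M a
  have hK0 := jkK_nonneg M a
  have hKp := jkK_periodic M a
  set K := jkK M a with hK
  -- the majorant
  let G : ℝ → ℝ := fun t => (h / 2 + (1 - Real.cos t) / h) * K t
  have hGc : Continuous G := by fun_prop
  have hGp : Function.Periodic G (2 * Real.pi) := by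
    intro t; simp only [G]; rw [hKp t, Real.cos_add_two_pi]
  have IG : ∫ t in (0:ℝ)..(2 * Real.pi), G t = 2 * Real.pi * S * (h / 2 + (1 - Real.cos h) / h) := by
    have : ∀ t, G t = (h / 2 + 1 / h) * K t - (1 / h) * (K t * Real.cos t) := by
      intro t; simp only [G]; ring
    simp_rw [this]
    rw [intervalIntegral.integral_sub (Continuous.intervalIntegrable (by fun_prop) _ _)
      (Continuous.intervalIntegrable (by fun_prop) _ _), intervalIntegral.integral_const_mul,
      intervalIntegral.integral_const_mul, I0, I1]
    ring
  have IGle : ∫ t in (0:ℝ)..(2 * Real.pi), G t ≤ 2 * Real.pi * S * h := by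
    rw [IG]
    apply mul_le_mul_of_nonneg_left _ (by positivity)
    have := Real.one_sub_sq_div_two_le_cos (x := h)
    have : (1 - Real.cos h) / h ≤ h / 2 := by
      rw [div_le_iff₀ hh0]; nlinarith
    linarith
  let W : ℝ → ℝ → ℝ := fun θ φ => (K (θ + φ) + K (θ - φ)) / 2
  let p : Polynomial ℝ := Polynomial.C (1 / (2 * Real.pi * S)) *
    ∑ k ∈ Finset.range (M + 1), ∑ l ∈ Finset.range (M + 1),
    Polynomial.C (a k * a l * ∫ φ in (0:ℝ)..(2 * Real.pi),
      g φ * Real.cos (((k : ℤ) - (l : ℤ) : ℤ) * φ)) *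
      Polynomial.Chebyshev.T ℝ ((k : ℤ) - (l : ℤ))
  have hp : ∀ θ, p.eval (Real.cos θ) * (2 * Real.pi * S) =
      ∫ φ in (0:ℝ)..(2 * Real.pi), g φ * W θ φ := by
    intro θ
    have hW : ∀ φ, g φ * W θ φ = ∑ k ∈ Finset.range (M + 1), ∑ l ∈ Finset.range (M + 1),
        a k * a l * Real.cos (((k : ℤ) - (l : ℤ) : ℤ) * θ) *
        (g φ * Real.cos (((k : ℤ) - (l : ℤ) : ℤ) * φ)) := by
      intro φ
      simp only [W, hK, jkK]
      rw [← Finset.sum_add_distrib, Finset.sum_div, Finset.mul_sum]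
      refine Finset.sum_congr rfl fun k _ => ?_
      rw [← Finset.sum_add_distrib, Finset.sum_div, Finset.mul_sum]
      refine Finset.sum_congr rfl fun l _ => ?_
      rw [mul_add, mul_sub, Real.cos_add, Real.cos_sub]; ring
    simp_rw [hW]
    rw [intervalIntegral.integral_finsetSum
      (fun k _ => Continuous.intervalIntegrable (by fun_prop) _ _)]
    simp only [p, Polynomial.eval_mul, Polynomial.eval_C, Polynomial.eval_finset_sum]
    rw [mul_comm, ← mul_assoc, mul_one_div_cancel (by positivity), one_mul]
    refine Finset.sum_congr rfl fun k _ => ?_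
    rw [intervalIntegral.integral_finsetSum
      (fun k _ => Continuous.intervalIntegrable (by fun_prop) _ _)]
    refine Finset.sum_congr rfl fun l _ => ?_
    rw [intervalIntegral.integral_const_mul, Polynomial.Chebyshev.T_real_cos]
    ring
  refine ⟨p, ?_, ?_⟩
  · refine (Polynomial.natDegree_C_mul_le _ _).trans ?_
    refine Polynomial.natDegree_sum_le_of_forall_le _ _ fun k hk => ?_
    refine Polynomial.natDegree_sum_le_of_forall_le _ _ fun l hl => ?_
    refine (Polynomial.natDegree_C_mul_le _ _).trans ((jk_natDegree_T _).trans ?_)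
    simp at hk hl; omega
  · intro x hx
    obtain ⟨θ, rfl⟩ : ∃ θ, x = Real.cos θ := ⟨Real.arccos x, (Real.cos_arccos hx.1 hx.2).symm⟩
    have hWc : Continuous (W θ) := by simp only [W]; fun_prop
    have IW : ∫ φ in (0:ℝ)..(2 * Real.pi), W θ φ = 2 * Real.pi * S := by
      simp only [W]
      rw [intervalIntegral.integral_div,
        intervalIntegral.integral_add (Continuous.intervalIntegrable (by fun_prop) _ _)
        (Continuous.intervalIntegrable (by fun_prop) _ _), (jk_shift K hKp θ).1,
        (jk_shift K hKp θ).2, I0]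
      ring
    have key : (f (Real.cos θ) - p.eval (Real.cos θ)) * (2 * Real.pi * S) =
        ∫ φ in (0:ℝ)..(2 * Real.pi), (g θ - g φ) * W θ φ := by
      simp_rw [sub_mul]
      rw [intervalIntegral.integral_sub (Continuous.intervalIntegrable (by fun_prop) _ _)
        (Continuous.intervalIntegrable (by fun_prop) _ _), hp, intervalIntegral.integral_const_mul,
        IW]
    have bd : |∫ φ in (0:ℝ)..(2 * Real.pi), (g θ - g φ) * W θ φ| ≤
        ∫ φ in (0:ℝ)..(2 * Real.pi), L * ((G (θ + φ) + G (θ - φ)) / 2) := by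
      rw [← Real.norm_eq_abs]
      apply intervalIntegral.norm_integral_le_of_norm_le (by positivity) _
        (Continuous.intervalIntegrable (by fun_prop) _ _)
      refine Filter.Eventually.of_forall fun φ _ => ?_
      have hW0 : 0 ≤ W θ φ := by
        simp only [W]; linarith [hK0 (θ + φ), hK0 (θ - φ)]
      rw [Real.norm_eq_abs, abs_mul, abs_of_nonneg hW0]
      refine (mul_le_mul_of_nonneg_right (hgL θ φ) hW0).trans ?_
      rw [mul_assoc]
      apply mul_le_mul_of_nonneg_left _ hL
      simp only [W, G]
      have q1 := mul_le_mul_of_nonneg_right (jk_pt θ φ h hh0) (hK0 (θ - φ))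
      have q2 := mul_le_mul_of_nonneg_right (jk_pt' θ φ h hh0) (hK0 (θ + φ))
      linarith
    have IB : ∫ φ in (0:ℝ)..(2 * Real.pi), L * ((G (θ + φ) + G (θ - φ)) / 2) =
        L * ∫ t in (0:ℝ)..(2 * Real.pi), G t := by
      rw [intervalIntegral.integral_const_mul, intervalIntegral.integral_div,
        intervalIntegral.integral_add (Continuous.intervalIntegrable (by fun_prop) _ _)
        (Continuous.intervalIntegrable (by fun_prop) _ _), (jk_shift G hGp θ).1,
        (jk_shift G hGp θ).2]
      ring
    rw [← key, IB, abs_mul, abs_of_pos (show 0 < 2 * Real.pi * S by positivity)] at bd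
    have fin : |f (Real.cos θ) - p.eval (Real.cos θ)| ≤ L * h := by
      have := mul_le_mul_of_nonneg_left IGle hL
      refine le_of_mul_le_mul_right (a := 2 * Real.pi * S) ?_ (by positivity)
      linarith
    refine fin.trans ?_
    have : h ≤ 6 / M := by
      rw [hh, div_le_div_iff₀ (by positivity) hMp]
      nlinarith [Real.pi_le_four]
    calc L * h ≤ L * (6 / M) := mul_le_mul_of_nonneg_left this hL
      _ = 6 * L / M := by ring
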